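/- Let d ≥ 1, m ≥ 1 and k ≥ 0 be integers with d + m ≥ 2, let R(1), …, R(d) be positive reals with p_res := 1 − Σ_{i=1}^d R(i) > 0, let R^res on {1, …, d+1} be given by R^res(i) = R(i) for i ≤ d and R^res(d+1) = p_res, and let R̂ on Ω = {1, …, d+m} be given by R̂(i) = R(i) for i ≤ d and R̂(i) = p_res/m for d < i ≤ d+m. Let D be the leaf set of any finite rooted (d+m)-ary tree with exactly k+1 internal nodes in which every internal node has exactly d+m children, and let W(w) = Π_{t=1}^{|w|} R̂(w_t) be the induced word distribution on D. If H(R^res) + p_res·log₂ m > 0, then the expected word length satisfies Σ_{w∈D} W(w)·|w| ≤ (log₂(d+m) + log₂(k+1)) / (H(R^res) + p_res·log₂ m). -/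

import Mathlib

/-!
The entropy of the word distribution `W` is the mean word length times the entropy `h` of the
letter distribution, while `H(W) ≤ log₂ N` for any `N ≥ |D|`; a full `n`-ary tree with `k + 1`
internal nodes has `1 + (k + 1)(n - 1) ≤ n (k + 1)` leaves, which gives the bound.

All the facts about the tree come from one telescoping identity (`sum_leaves`): every node other
than the root is `w ++ [a]` for a unique internal node `w` and letter `a`, so for every `f`
`∑_{leaves} f = f [] + ∑_{w internal} (∑ a, f (w ++ [a]) - f w)`.
With `f = 1` it counts leaves, with `f = W` it shows that `W` sums to `1` on the leaves, and with
`f w = W w * (log₂ (W w) + h * |w|)` every increment vanishes, which is the entropy identity.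
The letter distribution spread over `m` extra indices has entropy `H(R^res) + p_res log₂ m`.
-/

open Finset

lemma word_prob_pos {A : Type*} (p : A → ℝ) (hpos : ∀ a, 0 < p a) (w : List A) :
    0 < (w.map p).prod := by
  apply List.prod_pos
  simp only [List.mem_map]
  rintro _ ⟨a, _, rfl⟩
  exact hpos a

section Tree

variable {A : Type*} [Fintype A] (T : Finset (List A))
  [DecidablePred fun w : List A => ∃ a : A, w ++ [a] ∈ T]
  [DecidablePred fun w : List A => ∀ a : A, w ++ [a] ∉ T]

lemma sum_leaves (hroot : [] ∈ T)
    (hpre : ∀ w ∈ T, ∀ w' : List A, w' <+: w → w' ∈ T)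
    (hfull : ∀ w ∈ T, (∃ a : A, w ++ [a] ∈ T) → ∀ a : A, w ++ [a] ∈ T)
    (f : List A → ℝ) :
    ∑ w ∈ T.filter (fun w => ∀ a : A, w ++ [a] ∉ T), f w
      = f [] + ∑ w ∈ T.filter (fun w => ∃ a : A, w ++ [a] ∈ T),
          (∑ a, f (w ++ [a]) - f w) := by
  classical
  have h1 : ∑ w ∈ T.filter (fun w => ∃ a : A, w ++ [a] ∈ T), f w
      + ∑ w ∈ T.filter (fun w => ∀ a : A, w ++ [a] ∉ T), f w = ∑ w ∈ T, f w := by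
    rw [← sum_filter_add_sum_filter_not T (fun w => ∃ a : A, w ++ [a] ∈ T)]
    simp only [not_exists]
  have h2 : ∑ w ∈ T.filter (fun w => ∃ a : A, w ++ [a] ∈ T), ∑ a, f (w ++ [a])
      = ∑ w ∈ T.erase [], f w := by
    rw [← sum_product']
    refine sum_bij (fun x _ => x.1 ++ [x.2]) ?_ ?_ ?_ ?_
    · rintro ⟨w, a⟩ hx
      simp only [mem_product, mem_filter, mem_univ, and_true] at hx
      simpa using hfull w hx.1 hx.2 a
    · rintro ⟨w, a⟩ _ ⟨w', a'⟩ _ h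
      simpa using h
    · intro w hw
      rw [mem_erase] at hw
      obtain rfl | ⟨u, a, rfl⟩ := List.eq_nil_or_concat w
      · exact absurd rfl hw.1
      · simp only [List.concat_eq_append] at hw ⊢
        refine ⟨(u, a), ?_, rfl⟩
        simp only [mem_product, mem_filter, mem_univ, and_true]
        exact ⟨hpre _ hw.2 _ (List.prefix_append _ _), a, hw.2⟩
    · intro _ _
      rfl
  have h3 := add_sum_erase T f hroot
  rw [sum_sub_distrib]
  linarith

lemma card_leaves (hroot : [] ∈ T)
    (hpre : ∀ w ∈ T, ∀ w' : List A, w' <+: w → w' ∈ T)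
    (hfull : ∀ w ∈ T, (∃ a : A, w ++ [a] ∈ T) → ∀ a : A, w ++ [a] ∈ T) :
    ((T.filter (fun w => ∀ a : A, w ++ [a] ∉ T)).card : ℝ)
      = 1 + ((T.filter (fun w => ∃ a : A, w ++ [a] ∈ T)).card : ℝ)
          * ((Fintype.card A : ℝ) - 1) := by
  have h := sum_leaves T hroot hpre hfull (fun _ => 1)
  simpa [mul_sub] using h

lemma sum_word_prob (hroot : [] ∈ T)
    (hpre : ∀ w ∈ T, ∀ w' : List A, w' <+: w → w' ∈ T)
    (hfull : ∀ w ∈ T, (∃ a : A, w ++ [a] ∈ T) → ∀ a : A, w ++ [a] ∈ T)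
    (p : A → ℝ) (hp : ∑ a, p a = 1) :
    ∑ w ∈ T.filter (fun w => ∀ a : A, w ++ [a] ∉ T), (w.map p).prod = 1 := by
  rw [sum_leaves T hroot hpre hfull]
  simp [← mul_sum, hp]

/-- The entropy of the leaf distribution is the letter entropy times the mean word length. -/
lemma entropy_leaves (hroot : [] ∈ T)
    (hpre : ∀ w ∈ T, ∀ w' : List A, w' <+: w → w' ∈ T)
    (hfull : ∀ w ∈ T, (∃ a : A, w ++ [a] ∈ T) → ∀ a : A, w ++ [a] ∈ T)
    (p : A → ℝ) (hpos : ∀ a, 0 < p a) (hp : ∑ a, p a = 1) :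
    -∑ w ∈ T.filter (fun w => ∀ a : A, w ++ [a] ∉ T),
        (w.map p).prod * Real.logb 2 (w.map p).prod
      = (-∑ a, p a * Real.logb 2 (p a))
        * ∑ w ∈ T.filter (fun w => ∀ a : A, w ++ [a] ∉ T),
            (w.map p).prod * (w.length : ℝ) := by
  set h := -∑ a, p a * Real.logb 2 (p a) with hh
  have key := sum_leaves T hroot hpre hfull
    (fun w => (w.map p).prod * (Real.logb 2 (w.map p).prod + h * (w.length : ℝ)))
  rw [sum_eq_zero (s := T.filter (fun w => ∃ a : A, w ++ [a] ∈ T))] at key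
  · simp only [mul_add, sum_add_distrib] at key
    have e : ∑ w ∈ T.filter (fun w => ∀ a : A, w ++ [a] ∉ T),
          (w.map p).prod * (h * (w.length : ℝ))
        = h * ∑ w ∈ T.filter (fun w => ∀ a : A, w ++ [a] ∉ T),
            (w.map p).prod * (w.length : ℝ) := by
      rw [mul_sum]
      exact sum_congr rfl fun w _ => by ring
    rw [e] at key
    simp at key
    linarith
  · intro w _
    have e : ∀ a, ((w ++ [a]).map p).prod
          * (Real.logb 2 ((w ++ [a]).map p).prod + h * ((w ++ [a]).length : ℝ))
        = (w.map p).prod * (Real.logb 2 (w.map p).prod + h * (w.length : ℝ) + h) * p a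
          + (w.map p).prod * (p a * Real.logb 2 (p a)) := by
      intro a
      have hw := word_prob_pos p hpos w
      simp only [List.map_append, List.map_cons, List.map_nil, List.prod_append,
        List.prod_singleton, List.length_append, List.length_singleton]
      rw [Real.logb_mul hw.ne' (hpos a).ne']
      push_cast
      ring
    simp only [e, sum_add_distrib, ← mul_sum, hp]
    rw [show ∑ a, p a * Real.logb 2 (p a) = -h by simp [hh]]
    ring

end Tree

/-- A distribution on at most `N` points has entropy at most `log₂ N`. -/
lemma entropy_le_logb {ι : Type*} (D : Finset ι) (P : ι → ℝ) (hpos : ∀ w ∈ D, 0 < P w)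
    (hsum : ∑ w ∈ D, P w = 1) (N : ℝ) (hN : 0 < N) (hcard : (D.card : ℝ) ≤ N) :
    -∑ w ∈ D, P w * Real.logb 2 (P w) ≤ Real.logb 2 N := by
  have hl : 0 < Real.log 2 := Real.log_pos one_lt_two
  -- The pointwise bound is `log x ≤ x - 1` at `x = 1 / (N * P w)`.
  have h1 : ∀ w ∈ D, -(P w * Real.log (P w)) ≤ P w * Real.log N + (1 / N - P w) := by
    intro w hw
    have hP := hpos w hw
    have h := Real.log_le_sub_one_of_pos (x := (N * P w)⁻¹) (by positivity)
    rw [Real.log_inv, Real.log_mul hN.ne' hP.ne'] at h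
    have h' := mul_le_mul_of_nonneg_left h hP.le
    have e : P w * ((N * P w)⁻¹ - 1) = 1 / N - P w := by field_simp
    rw [e] at h'
    linarith
  have h2 := sum_le_sum h1
  rw [sum_neg_distrib, sum_add_distrib, sum_sub_distrib, ← sum_mul, hsum, sum_const,
    nsmul_eq_mul] at h2
  have h3 : (D.card : ℝ) * (1 / N) ≤ 1 := by
    rw [mul_one_div]
    exact (div_le_one hN).2 hcard
  have h4 : -∑ w ∈ D, P w * Real.logb 2 (P w)
      = (-∑ w ∈ D, P w * Real.log (P w)) / Real.log 2 := by
    simp only [Real.logb, neg_div, sum_div, mul_div_assoc]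
  rw [h4, Real.logb]
  gcongr
  linarith

/-- **Lemma 2 (Upper bound m).**
Spread the residual acceptance mass `p_res` equally over `m` extra indices to obtain the
distribution `R̂` on the alphabet `Fin (d + m)`. For the leaf set `D` of any finite rooted
`(d+m)`-ary tree with exactly `k + 1` internal nodes, each with exactly `d + m` children,
with induced word distribution `W w = ∏ t, R̂ (w t)`, if
`H(R^res) + p_res * log₂ m > 0` then the expected word length is at most
`(log₂ (d + m) + log₂ (k + 1)) / (H(R^res) + p_res * log₂ m)`. -/
theorem upper_bound_m
    (d m k : ℕ) (hd : 1 ≤ d) (hm : 1 ≤ m) (hdm : 2 ≤ d + m)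
    (R : ℕ → ℝ) (hR_pos : ∀ i ∈ Icc 1 d, 0 < R i)
    (pres : ℝ) (hpres : pres = 1 - ∑ i ∈ Icc 1 d, R i) (hpres_pos : 0 < pres)
    (Rres : ℕ → ℝ)
    (hRres_eq : ∀ i ∈ Icc 1 d, Rres i = R i)
    (hRres_last : Rres (d + 1) = pres)
    (Rhat : Fin (d + m) → ℝ)
    (hRhat_head : ∀ i : Fin (d + m), (i : ℕ) < d → Rhat i = R ((i : ℕ) + 1))
    (hRhat_tail : ∀ i : Fin (d + m), d ≤ (i : ℕ) → Rhat i = pres / m)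
    (T : Finset (List (Fin (d + m))))
    (hT_root : [] ∈ T)
    (hT_prefix_closed : ∀ w ∈ T, ∀ w' : List (Fin (d + m)), w' <+: w → w' ∈ T)
    (hT_full : ∀ w ∈ T, (∃ a : Fin (d + m), w ++ [a] ∈ T) →
        ∀ a : Fin (d + m), w ++ [a] ∈ T)
    (hT_internal : (T.filter fun w => ∃ a : Fin (d + m), w ++ [a] ∈ T).card = k + 1)
    (D : Finset (List (Fin (d + m))))
    (hD : D = T.filter fun w => ∀ a : Fin (d + m), w ++ [a] ∉ T)
    (hH_pos : 0 < (-∑ i ∈ Icc 1 (d + 1), Rres i * Real.logb 2 (Rres i))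
        + pres * Real.logb 2 m) :
    (∑ w ∈ D, (w.map Rhat).prod * (w.length : ℝ))
      ≤ (Real.logb 2 (d + m) + Real.logb 2 (k + 1))
          / ((-∑ i ∈ Icc 1 (d + 1), Rres i * Real.logb 2 (Rres i))
              + pres * Real.logb 2 m) := by
  have hm0 : (0 : ℝ) < m := by exact_mod_cast hm
  -- Splitting the alphabet into the `d` original indices and the `m` extra ones.
  have split : ∀ g : ℝ → ℝ,
      ∑ a, g (Rhat a) = ∑ i ∈ Icc 1 d, g (R i) + m * g (pres / m) := by
    intro g
    rw [Fin.sum_univ_add]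
    congr 1
    · rw [← Finset.Ico_succ_right_eq_Icc, Finset.sum_Ico_eq_sum_range, Finset.sum_range]
      refine Fintype.sum_equiv (finCongr (by simp)) _ _ fun i => ?_
      rw [hRhat_head _ (by simp)]
      change g (R ((i : ℕ) + 1)) = g (R (1 + (i : ℕ)))
      rw [add_comm]
    · simp [hRhat_tail]
  have hpos : ∀ a, 0 < Rhat a := by
    intro a
    by_cases h : (a : ℕ) < d
    · rw [hRhat_head a h]
      exact hR_pos _ (mem_Icc.2 ⟨by omega, by omega⟩)
    · rw [hRhat_tail a (not_lt.1 h)]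
      positivity
  have hsum : ∑ a, Rhat a = 1 := by
    have h := split id
    simp only [id] at h
    rw [h, mul_div_cancel₀ _ hm0.ne', hpres]
    ring
  have hent : (-∑ i ∈ Icc 1 (d + 1), Rres i * Real.logb 2 (Rres i)) + pres * Real.logb 2 m
      = -∑ a, Rhat a * Real.logb 2 (Rhat a) := by
    rw [split (fun x => x * Real.logb 2 x), sum_Icc_succ_top (by omega), hRres_last,
      sum_congr rfl fun i hi => by rw [hRres_eq i hi],
      Real.logb_div hpres_pos.ne' hm0.ne']
    field_simp
    ring
  rw [hent] at hH_pos ⊢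
  have hn : (0 : ℝ) < (d : ℝ) + m := by positivity
  have hk : (0 : ℝ) < (k : ℝ) + 1 := by positivity
  have hcard := card_leaves T hT_root hT_prefix_closed hT_full
  rw [hT_internal, Fintype.card_fin] at hcard
  push_cast at hcard
  have hle := entropy_le_logb _ (fun w : List (Fin (d + m)) => (w.map Rhat).prod)
    (fun w _ => word_prob_pos Rhat hpos w)
    (sum_word_prob T hT_root hT_prefix_closed hT_full Rhat hsum)
    (((d : ℝ) + m) * ((k : ℝ) + 1)) (by positivity) (by
      rw [hcard]
      have : (0 : ℝ) ≤ k := Nat.cast_nonneg k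
      linarith)
  rw [entropy_leaves T hT_root hT_prefix_closed hT_full Rhat hpos hsum,
    Real.logb_mul hn.ne' hk.ne'] at hle
  rw [le_div_iff₀ hH_pos, mul_comm, hD]
  exact hle
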